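/- With high probability, the uniformly random chord diagram C_n contains no block of ⌊5 log n⌋ consecutive endpoints (cyclically modulo 2n) that contains two chords (both with both endpoints in the block). Consequently, with high probability the random oriented chord diagram D_n has at most one strong component of size larger than 1 in its directed intersection graph. -/

import Mathlib

open scoped Classical
open Finset Filter

/-- A chord diagram of size `n`: a fixed-point-free involution of the `2n`
endpoints `0, 1, …, 2n-1` (endpoint `i` here corresponds to the label `i+1`). -/
abbrev ChordDiagram (n : ℕ) :=
  {f : Fin (2*n) → Fin (2*n) // (∀ i, f (f i) = i) ∧ ∀ i, f i ≠ i}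

/-- `c` lies strictly between `a` and `b`. -/
def Between {m : ℕ} (a b c : Fin m) : Prop := min a b < c ∧ c < max a b

/-- The chord of `C` containing endpoint `x` crosses the chord containing endpoint `u`:
exactly one of the two endpoints `u`, `C u` lies strictly between `x` and `C x`. -/
def Crosses {n : ℕ} (C : ChordDiagram n) (x u : Fin (2*n)) : Prop :=
  Xor' (Between x (C.1 x) u) (Between x (C.1 x) (C.1 u))

/-- Uniform probability of an event over all chord diagrams of size `n`. -/
noncomputable def prob (n : ℕ) (E : ChordDiagram n → Prop) : ℝ :=
  ((Finset.univ.filter E).card : ℝ) / ((Finset.univ : Finset (ChordDiagram n)).card : ℝ)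

/-- The degree of the chord of `C` containing endpoint `x`: the number of chords
crossing it (each chord counted once via its smaller endpoint). -/
noncomputable def chordDegree {n : ℕ} (C : ChordDiagram n) (x : Fin (2*n)) : ℕ :=
  (Finset.univ.filter fun u => u < C.1 u ∧ Crosses C x u).card

/-- The length of the chord of `C` containing endpoint `x`: the number of endpoints
on the smaller of the two arcs it determines. -/
def chordLength {n : ℕ} (C : ChordDiagram n) (x : Fin (2*n)) : ℕ :=
  min (max (x:ℕ) (C.1 x : ℕ) - min (x:ℕ) (C.1 x : ℕ) - 1)
      (2*n - (max (x:ℕ) (C.1 x : ℕ) - min (x:ℕ) (C.1 x : ℕ)) - 1)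

/-- Degree of the chord containing endpoint `1` (index `0`). -/
noncomputable def degreeC1 (n : ℕ) (C : ChordDiagram n) : ℕ :=
  if h : 0 < n then chordDegree C ⟨0, by omega⟩ else 0

/-- Length of the chord containing endpoint `1` (index `0`). -/
noncomputable def lengthC1 (n : ℕ) (C : ChordDiagram n) : ℕ :=
  if h : 0 < n then chordLength C ⟨0, by omega⟩ else 0

/-- Membership in the component (w.r.t. the crossing relation) of the chord
containing the root endpoint. -/
def InRootComponent {n : ℕ} (C : ChordDiagram n) (root x : Fin (2*n)) : Prop :=
  x = root ∨ x = C.1 root ∨ Relation.ReflTransGen (fun a b => Crosses C a b) root x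

/-- The chord containing `x` is simple: it joins two (cyclically) consecutive endpoints. -/
def IsSimple {n : ℕ} (C : ChordDiagram n) (x : Fin (2*n)) : Prop :=
  (C.1 x : ℕ) = ((x : ℕ) + 1) % (2*n) ∨ (x : ℕ) = ((C.1 x : ℕ) + 1) % (2*n)

/-- `C` is monolithic (with respect to `root`): every chord not in the root
component is simple, and no two simple chords are next to each other. -/
def Monolithic {n : ℕ} (C : ChordDiagram n) (root : Fin (2*n)) : Prop :=
  (∀ x : Fin (2*n), ¬ InRootComponent C root x → IsSimple C x) ∧
  ¬ ∃ i : Fin (2*n), (C.1 i : ℕ) = ((i : ℕ) + 1) % (2*n) ∧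
      ∃ j : Fin (2*n), (j : ℕ) = ((i : ℕ) + 2) % (2*n) ∧ (C.1 j : ℕ) = ((i : ℕ) + 3) % (2*n)

/-- `L_j`: the number of chords of length `j` in `C`. -/
noncomputable def lengthCount (n : ℕ) (j : ℕ) (C : ChordDiagram n) : ℕ :=
  (Finset.univ.filter fun x : Fin (2*n) => x < C.1 x ∧ chordLength C x = j).card

/-- The endpoints of chords of `C` of length at least `k`. -/
noncomputable def lenAtLeast (n k : ℕ) (C : ChordDiagram n) : Finset (Fin (2*n)) :=
  Finset.univ.filter fun x => k ≤ chordLength C x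

/-- The number of chords with endpoints in `S` crossing the chord containing `x`. -/
noncomputable def degreeIn {n : ℕ} (C : ChordDiagram n) (S : Finset (Fin (2*n)))
    (x : Fin (2*n)) : ℕ :=
  (S.filter fun u => u < C.1 u ∧ Crosses C x u).card

/-- `S` (a chord-closed set of endpoints) is a set of chords each crossing at
least `k` other chords of `S`. -/
def IsCore {n : ℕ} (C : ChordDiagram n) (k : ℕ) (S : Finset (Fin (2*n))) : Prop :=
  (∀ x ∈ S, C.1 x ∈ S) ∧ ∀ x ∈ S, k ≤ degreeIn C S x

/-- The `k`-core: the union of all sets of chords in which every chord crosses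
at least `k` other chords of the set. -/
noncomputable def kCore (n k : ℕ) (C : ChordDiagram n) : Finset (Fin (2*n)) :=
  Finset.univ.filter fun x => ∃ S : Finset (Fin (2*n)), IsCore C k S ∧ x ∈ S

/-- The number of chords in the `k`-core of `C`. -/
noncomputable def kCoreSize (n k : ℕ) (C : ChordDiagram n) : ℕ :=
  ((kCore n k C).filter fun x => x < C.1 x).card

/-- `Z_k`: the number of chords of length strictly less than `k`. -/
noncomputable def shortCount (n k : ℕ) (C : ChordDiagram n) : ℕ :=
  (Finset.univ.filter fun x : Fin (2*n) => x < C.1 x ∧ chordLength C x < k).card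

/-- `C` contains a balanced clique of size `m`: a set of `m` pairwise crossing
chords with exactly one endpoint in each of the `2m` blocks of length `⌊n/m⌋`. -/
def HasBalancedClique (n m : ℕ) (C : ChordDiagram n) : Prop :=
  ∃ S : Finset (Fin (2*n)),
    (∀ x ∈ S, C.1 x ∈ S) ∧
    (∀ x ∈ S, ∀ u ∈ S, u ≠ x → u ≠ C.1 x → Crosses C x u) ∧
    (∀ t : ℕ, 1 ≤ t → t ≤ 2*m →
      (S.filter fun x => (t-1) * (n/m) ≤ (x:ℕ) ∧ (x:ℕ) < t * (n/m)).card = 1)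

/-- An oriented chord diagram: a chord diagram together with auxiliary fair-coin
bits; the bit attached to a crossing pair of chords (indexed by their smaller
endpoints) decides which chord over-crosses the other. -/
abbrev OrientedChordDiagram (n : ℕ) := ChordDiagram n × (Fin (2*n) → Fin (2*n) → Bool)

/-- The smaller endpoint of the chord of `C` containing `x`. -/
def chordRep {n : ℕ} (C : ChordDiagram n) (x : Fin (2*n)) : Fin (2*n) := min x (C.1 x)

/-- In the oriented diagram `D`, the chord containing `x` crosses and
over-crosses the chord containing `u`. -/
def OverD {n : ℕ} (D : OrientedChordDiagram n) (x u : Fin (2*n)) : Prop :=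
  Crosses D.1 x u ∧
    ((chordRep D.1 x ≤ chordRep D.1 u ∧ D.2 (chordRep D.1 x) (chordRep D.1 u) = true) ∨
     (chordRep D.1 u < chordRep D.1 x ∧ D.2 (chordRep D.1 u) (chordRep D.1 x) = false))

/-- Uniform probability of an event over all oriented chord diagrams of size `n`
(this yields a uniformly random diagram with each crossing oriented by an
independent fair coin). -/
noncomputable def probD (n : ℕ) (E : OrientedChordDiagram n → Prop) : ℝ :=
  ((Finset.univ.filter E).card : ℝ) /
    ((Finset.univ : Finset (OrientedChordDiagram n)).card : ℝ)

/-- The chords (given by their endpoints in `S`) are strongly connected in the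
directed intersection graph of `D`, using only chords of `S`. -/
def StronglyConnectedIn {n : ℕ} (D : OrientedChordDiagram n) (S : Set (Fin (2*n))) : Prop :=
  ∀ c ∈ S, ∀ d ∈ S,
    Relation.ReflTransGen (fun a b => a ∈ S ∧ b ∈ S ∧ OverD D a b) c d

/-- The number of chords with both endpoints in the cyclic block
`{i, i+1, …, i+t-1}` (mod `2n`). -/
noncomputable def chordsInBlock (n : ℕ) (C : ChordDiagram n) (i t : ℕ) : ℕ :=
  (Finset.univ.filter fun x : Fin (2*n) => x < C.1 x ∧
    (∃ a < t, (x:ℕ) = (i + a) % (2*n)) ∧ (∃ a < t, ((C.1 x : ℕ)) = (i + a) % (2*n))).card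

/-- The chord of `x` reaches the chord of `u` in the directed intersection graph
(of the whole diagram); endpoints of the same chord represent the same vertex. -/
def ReachChord {n : ℕ} (D : OrientedChordDiagram n) (x u : Fin (2*n)) : Prop :=
  u = x ∨ u = D.1.1 x ∨ Relation.ReflTransGen (fun a b => OverD D a b) x u

/-- The chords of `x` and `u` lie in the same strong component. -/
def MutualReach {n : ℕ} (D : OrientedChordDiagram n) (x u : Fin (2*n)) : Prop :=
  ReachChord D x u ∧ ReachChord D u x

/-- The number of single-chord strong components of `D`. -/
noncomputable def singleCount (n : ℕ) (D : OrientedChordDiagram n) : ℕ :=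
  (Finset.univ.filter fun x : Fin (2*n) =>
    x < D.1.1 x ∧ ∀ u : Fin (2*n), u ≠ x → u ≠ D.1.1 x → ¬ MutualReach D x u).card

/-!
Two chords lie in a given block of `t` endpoints with probability `O(t⁴ / n²)`, so by a union bound
crowded blocks of length `o(n ^ (1/4))` are unlikely, in particular those of length `⌊5 log n⌋₊`.

For the strong components, let `m` be a small power of `n`. With high probability any interval of
`2m` endpoints is joined by a chord to any disjoint interval of `n / 10` endpoints: avoiding the
latter costs a constant factor for each of `m` exposed endpoints. This yields a nearly diametral
chord, the pivot, and `m` chords crossing both the pivot and any given chord of length of order at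
least `m²`. Each common crossing links the two chords by a path of length two with probability
`1/4` in either direction, and the coins of distinct crossings are distinct, so all links to a given
long chord fail with probability `(3/4) ^ m`. Hence with high probability all long chords lie in the
strong component of the pivot. Two crossing short chords would lie in a crowded block, so every
chord in a nontrivial component is either long or in the component of a long chord.
-/

section UniformProb

variable {Ω Ξ ι : Type*} [Fintype Ω] [Fintype Ξ]

/-- The probability of the event `E` under the uniform distribution on the finite type `Ω`
(with value `0` when `Ω` is empty). Both `prob n` and `probD n` are instances of it. -/
noncomputable def uniformProb (E : Ω → Prop) : ℝ :=
  (#{ω | E ω} : ℝ) / Fintype.card Ω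

lemma uniformProb_nonneg (E : Ω → Prop) : 0 ≤ uniformProb E := by
  unfold uniformProb
  positivity

lemma uniformProb_le_one (E : Ω → Prop) : uniformProb E ≤ 1 :=
  div_le_one_of_le₀ (mod_cast card_le_univ _) (Nat.cast_nonneg _)

lemma uniformProb_mono {E F : Ω → Prop} (h : ∀ ω, E ω → F ω) :
    uniformProb E ≤ uniformProb F := by
  simp only [uniformProb]
  gcongr with ω
  exact h ω

lemma uniformProb_add_uniformProb_not [Nonempty Ω] (E : Ω → Prop) :
    uniformProb E + uniformProb (fun ω => ¬ E ω) = 1 := by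
  have hΩ : (Fintype.card Ω : ℝ) ≠ 0 := mod_cast Fintype.card_ne_zero
  simp only [uniformProb]
  rw [← add_div, div_eq_one_iff_eq hΩ, ← card_univ]
  exact_mod_cast card_filter_add_card_filter_not E

lemma uniformProb_eq_and_add_and_not (E F : Ω → Prop) :
    uniformProb E = uniformProb (fun ω => E ω ∧ F ω) + uniformProb (fun ω => E ω ∧ ¬ F ω) := by
  simp only [uniformProb]
  rw [← add_div, ← filter_filter, ← filter_filter]
  congr 1
  exact_mod_cast (card_filter_add_card_filter_not _).symm

lemma uniformProb_or_le (E F : Ω → Prop) :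
    uniformProb (fun ω => E ω ∨ F ω) ≤ uniformProb E + uniformProb F := by
  simp only [uniformProb]
  rw [← add_div, filter_or]
  gcongr
  exact_mod_cast card_union_le _ _

lemma uniformProb_exists_mem_le (s : Finset ι) (E : ι → Ω → Prop) {ε : ℝ}
    (h : ∀ i ∈ s, uniformProb (E i) ≤ ε) :
    uniformProb (fun ω => ∃ i ∈ s, E i ω) ≤ #s * ε := by
  have hunion : #{ω | ∃ i ∈ s, E i ω} ≤ ∑ i ∈ s, #{ω | E i ω} := by
    refine (card_le_card fun ω hω => ?_).trans card_biUnion_le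
    simpa using hω
  calc uniformProb (fun ω => ∃ i ∈ s, E i ω)
      ≤ (∑ i ∈ s, (#{ω | E i ω} : ℝ)) / Fintype.card Ω := by
        simp only [uniformProb]
        gcongr
        exact_mod_cast hunion
    _ = ∑ i ∈ s, uniformProb (E i) := sum_div _ _ _
    _ ≤ #s * ε := by simpa only [nsmul_eq_mul] using sum_le_card_nsmul s _ ε h

lemma uniformProb_comp_equiv (e : Ω ≃ Ξ) (E : Ξ → Prop) :
    uniformProb (fun ω => E (e ω)) = uniformProb E := by
  rw [uniformProb, uniformProb, Fintype.card_congr e]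
  congr 2
  exact card_equiv e (by simp)

lemma uniformProb_prod (E : Ω × Ξ → Prop) :
    uniformProb E = (∑ ω, uniformProb fun ξ => E (ω, ξ)) / Fintype.card Ω := by
  have hcard : #{p : Ω × Ξ | E p} = ∑ ω, #{ξ | E (ω, ξ)} := by
    simp only [card_filter, Fintype.sum_prod_type]
  simp only [uniformProb]
  rw [← sum_div, hcard, Fintype.card_prod, div_div, mul_comm]
  push_cast
  rfl

lemma uniformProb_prod_le {B : Ω → Prop} {E : Ω × Ξ → Prop} {ε : ℝ} (hε : 0 ≤ ε)
    (h : ∀ ω, ¬ B ω → uniformProb (fun ξ => E (ω, ξ)) ≤ ε) :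
    uniformProb E ≤ uniformProb B + ε := by
  have hfiber (ω : Ω) : uniformProb (fun ξ => E (ω, ξ)) ≤ (if B ω then 1 else 0) + ε := by
    split_ifs with hB
    · linarith [uniformProb_le_one fun ξ => E (ω, ξ)]
    · simpa using h ω hB
  calc uniformProb E = (∑ ω, uniformProb fun ξ => E (ω, ξ)) / Fintype.card Ω := uniformProb_prod E
    _ ≤ (∑ ω, ((if B ω then 1 else 0) + ε)) / Fintype.card Ω := by
        gcongr
        exact hfiber _
    _ = uniformProb B + Fintype.card Ω * ε / Fintype.card Ω := by
        rw [sum_add_distrib, sum_boole, sum_const, card_univ, nsmul_eq_mul, add_div, uniformProb]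
    _ ≤ uniformProb B + ε := by
        gcongr
        exact div_le_of_le_mul₀ (by positivity) hε (mul_comm _ _).le

end UniformProb

section Coins

variable {ι κ : Type*} [Fintype ι] [DecidableEq ι]

lemma uniformProb_and_coin_eq {A : (ι → Bool) → Prop} {i : ι}
    (hA : ∀ ω c, A (Function.update ω i c) ↔ A ω) (b : Bool) :
    uniformProb (fun ω => A ω ∧ ω i = b) = uniformProb A / 2 := by
  have hflip : Function.Involutive fun ω : ι → Bool => Function.update ω i (!ω i) := by
    intro ω
    simp
  have hsymm : uniformProb (fun ω => A ω ∧ ω i = b) = uniformProb (fun ω => A ω ∧ ¬ ω i = b) := by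
    rw [← uniformProb_comp_equiv hflip.toPerm]
    congr with ω
    simpa [hA] using fun _ => Bool.eq_not
  linarith [uniformProb_eq_and_add_and_not A fun ω => ω i = b]

lemma uniformProb_forall_not_coin_pair_eq (E : Finset κ) {p q : κ → ι} (hp : Set.InjOn p E)
    (hq : Set.InjOn q E) (hpq : ∀ e ∈ E, ∀ e' ∈ E, p e ≠ q e') (s t : κ → Bool) :
    uniformProb (fun ω : ι → Bool => ∀ e ∈ E, ¬ (ω (p e) = s e ∧ ω (q e) = t e)) =
      (3 / 4) ^ #E := by
  induction E using Finset.induction_on with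
  | empty => simp [uniformProb]
  | insert a E ha ih =>
    set A : (ι → Bool) → Prop := fun ω => ∀ e ∈ E, ¬ (ω (p e) = s e ∧ ω (q e) = t e) with hAdef
    have hA (i : ι) (hi : ∀ e ∈ E, p e ≠ i ∧ q e ≠ i) (ω : ι → Bool) (c : Bool) :
        A (Function.update ω i c) ↔ A ω := by
      refine forall₂_congr fun e he => ?_
      rw [Function.update_of_ne (hi e he).1, Function.update_of_ne (hi e he).2]
    have hAp := hA (p a) fun e he => by
      constructor <;> grind [Set.InjOn]
    have hAq := hA (q a) fun e he => by
      constructor <;> grind [Set.InjOn]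
    have hpqa : p a ≠ q a := hpq a (mem_insert_self a E) a (mem_insert_self a E)
    have hhit : uniformProb (fun ω => A ω ∧ ω (p a) = s a ∧ ω (q a) = t a) = uniformProb A / 4 := by
      simp only [← and_assoc]
      rw [uniformProb_and_coin_eq (fun ω c => by simp [hAq, hpqa]), uniformProb_and_coin_eq hAp]
      ring
    have hinsert : uniformProb (fun ω : ι → Bool =>
        ∀ e ∈ insert a E, ¬ (ω (p e) = s e ∧ ω (q e) = t e)) =
        uniformProb fun ω => A ω ∧ ¬ (ω (p a) = s a ∧ ω (q a) = t a) := by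
      simp only [forall_mem_insert, hAdef, and_comm]
    have hprev : uniformProb A = (3 / 4) ^ #E :=
      ih (hp.mono (by simp)) (hq.mono (by simp)) fun e he e' he' =>
        hpq e (mem_insert_of_mem he) e' (mem_insert_of_mem he')
    rw [hinsert, card_insert_of_notMem ha, pow_succ]
    linarith [uniformProb_eq_and_add_and_not A fun ω => ω (p a) = s a ∧ ω (q a) = t a]

end Coins

section PerfectMatchings

variable {α : Type*} [Fintype α] [DecidableEq α] {V S T : Finset α} {x y : α} {f : α → α}

/-- The perfect matchings of `V`, encoded as the involutions of the ambient type `α` whose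
non-fixed points are exactly the elements of `V`. -/
noncomputable def perfectMatchings (V : Finset α) : Finset (α → α) :=
  {f | Function.Involutive f ∧ ∀ z, f z ≠ z ↔ z ∈ V}

lemma mem_perfectMatchings :
    f ∈ perfectMatchings V ↔ Function.Involutive f ∧ ∀ z, f z ≠ z ↔ z ∈ V := by
  simp [perfectMatchings]

lemma apply_mem_erase_of_mem_perfectMatchings (hf : f ∈ perfectMatchings V) (hx : x ∈ V) :
    f x ∈ V.erase x := by
  obtain ⟨hinv, hfix⟩ := mem_perfectMatchings.1 hf
  have hne : f x ≠ x := (hfix x).2 hx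
  exact mem_erase.2 ⟨hne, (hfix _).1 <| by rwa [hinv x, ne_comm]⟩

lemma swap_comp_mem_perfectMatchings_iff (hx : x ∈ V) (hy : y ∈ V) (hxy : x ≠ y) :
    Equiv.swap x y ∘ f ∈ perfectMatchings (V \ {x, y}) ↔ f ∈ perfectMatchings V ∧ f x = y := by
  simp only [mem_perfectMatchings, Function.Involutive, Function.comp_apply]
  constructor
  · rintro ⟨hinv, hfix⟩
    have hfx : f x = y := by grind
    have : f y = x := by grind
    grind
  · rintro ⟨⟨hinv, hfix⟩, hfx⟩
    have : f y = x := by grind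
    grind

lemma card_filter_perfectMatchings_apply_eq (hx : x ∈ V) (hy : y ∈ V) (hxy : x ≠ y)
    (P : (α → α) → Prop) [DecidablePred P] :
    #{f ∈ perfectMatchings V | f x = y ∧ P f} =
      #{g ∈ perfectMatchings (V \ {x, y}) | P (Equiv.swap x y ∘ g)} := by
  have hswap : Function.Involutive fun f : α → α => Equiv.swap x y ∘ f := fun f => by
    ext z
    simp
  refine card_equiv hswap.toPerm fun f => ?_
  have hff : Equiv.swap x y ∘ Equiv.swap x y ∘ f = f := hswap f
  simp [swap_comp_mem_perfectMatchings_iff hx hy hxy, hff, and_assoc]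

lemma card_filter_perfectMatchings (hx : x ∈ V) (P : (α → α) → Prop) [DecidablePred P] :
    #{f ∈ perfectMatchings V | P f} =
      ∑ y ∈ V.erase x, #{g ∈ perfectMatchings (V \ {x, y}) | P (Equiv.swap x y ∘ g)} := by
  have hmaps : Set.MapsTo (fun f : α → α => f x) ↑{f ∈ perfectMatchings V | P f} ↑(V.erase x) :=
    fun f hf => apply_mem_erase_of_mem_perfectMatchings (mem_filter.1 hf).1 hx
  rw [card_eq_sum_card_fiberwise hmaps]
  refine sum_congr rfl fun y hy => ?_
  obtain ⟨hyx, hyV⟩ := mem_erase.1 hy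
  rw [← card_filter_perfectMatchings_apply_eq hx hyV hyx.symm, filter_filter]
  simp only [and_comm]

lemma card_perfectMatchings {k : ℕ} (hV : #V = 2 * k) :
    #(perfectMatchings V) = Nat.doubleFactorial (2 * k - 1) := by
  induction k generalizing V with
  | zero =>
    have hid : perfectMatchings V = {id} := by
      ext f
      simp only [mem_perfectMatchings, card_eq_zero.1 hV, notMem_empty, iff_false, not_not,
        mem_singleton, funext_iff, id]
      exact ⟨fun h => h.2, fun h => ⟨fun z => by rw [h, h], h⟩⟩
    simp [hid]
  | succ k ih =>
    obtain ⟨x, hx⟩ : V.Nonempty := card_pos.1 (by omega)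
    have hfiber : ∀ y ∈ V.erase x, #(perfectMatchings (V \ {x, y})) =
        Nat.doubleFactorial (2 * k - 1) := fun y hy => ih <| by
      rw [card_sdiff_of_subset (by grind), card_pair (ne_of_mem_erase hy).symm, hV]
      omega
    have hsum := card_filter_perfectMatchings hx fun _ => True
    simp only [filter_true] at hsum
    rw [hsum, sum_congr rfl hfiber, sum_const, card_erase_of_mem hx, hV, smul_eq_mul]
    cases k with
    | zero => rfl
    | succ k => exact (Nat.doubleFactorial_add_two (2 * k + 1)).symm

lemma card_perfectMatchings_eq_mul {k : ℕ} (hV : #V = 2 * (k + 1)) (hx : x ∈ V) (hy : y ∈ V)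
    (hxy : x ≠ y) :
    #(perfectMatchings V) = (2 * k + 1) * #(perfectMatchings (V \ {x, y})) := by
  have hsdiff : #(V \ {x, y}) = 2 * k := by
    rw [card_sdiff_of_subset (by grind), card_pair hxy, hV]
    omega
  rw [card_perfectMatchings hV, card_perfectMatchings hsdiff]
  cases k with
  | zero => rfl
  | succ k => exact Nat.doubleFactorial_add_two (2 * k + 1)

lemma card_perfectMatchings_eq_mul_card_filter {k : ℕ} (hV : #V = 2 * (k + 2)) {a b c d : α}
    (hab : a ≠ b) (hcd : c ≠ d) (ha : a ∈ V) (hb : b ∈ V) (hc : c ∈ V \ {a, b})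
    (hd : d ∈ V \ {a, b}) :
    #(perfectMatchings V) =
      (2 * k + 3) * (2 * k + 1) * #{f ∈ perfectMatchings V | f a = b ∧ f c = d} := by
  obtain ⟨-, hda, hdb⟩ : d ∈ V ∧ d ≠ a ∧ d ≠ b := by simpa using hd
  have hVab : #(V \ {a, b}) = 2 * (k + 1) := by
    rw [card_sdiff_of_subset (by simp [insert_subset_iff, ha, hb]), card_pair hab, hV]
    omega
  have hswap (g : α → α) : (Equiv.swap a b ∘ g) c = d ↔ g c = d ∧ True := by
    rw [Function.comp_apply, Equiv.swap_apply_eq_iff, Equiv.swap_apply_of_ne_of_ne hda hdb,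
      and_true]
  rw [card_perfectMatchings_eq_mul hV ha hb hab, card_perfectMatchings_eq_mul hVab hc hd hcd,
    card_filter_perfectMatchings_apply_eq ha hb hab]
  simp only [hswap]
  rw [card_filter_perfectMatchings_apply_eq hc hd hcd, filter_true]
  ring

lemma card_filter_perfectMatchings_eq_sum_sdiff (hx : x ∈ V) {P : (α → α) → Prop}
    [DecidablePred P] (hP : ∀ f, P f → f x ∉ T) :
    #{f ∈ perfectMatchings V | P f} =
      ∑ y ∈ V.erase x \ T, #{g ∈ perfectMatchings (V \ {x, y}) | P (Equiv.swap x y ∘ g)} := by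
  rw [card_filter_perfectMatchings hx]
  refine (sum_subset sdiff_subset fun y hy hyT => ?_).symm
  obtain ⟨hyx, hyV⟩ := mem_erase.1 hy
  rw [← card_filter_perfectMatchings_apply_eq hx hyV hyx.symm, card_eq_zero, filter_eq_empty_iff]
  rintro f - ⟨rfl, hf⟩
  exact hP f hf (by simpa [hy] using hyT)

lemma card_filter_perfectMatchings_le_of_partner (hV : Even #V) (hx : x ∈ V) (hT : T ⊆ V)
    (hxT : x ∉ T) {P : (α → α) → Prop} [DecidablePred P] (hP : ∀ f, P f → f x ∉ T) {b : ℝ}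
    (hb : 0 ≤ b)
    (h : ∀ y ∈ V.erase x, y ∉ T →
      (#{g ∈ perfectMatchings (V \ {x, y}) | P (Equiv.swap x y ∘ g)} : ℝ) ≤
        b * #(perfectMatchings (V \ {x, y}))) :
    (#{f ∈ perfectMatchings V | P f} : ℝ) ≤
      (1 - #T / Fintype.card α) * b * #(perfectMatchings V) := by
  obtain ⟨k, hk⟩ : ∃ k, #V = 2 * (k + 1) := by
    obtain ⟨l, hl⟩ := hV
    have hpos : 0 < #V := card_pos.2 ⟨x, hx⟩
    exact ⟨l - 1, by omega⟩
  set c : ℝ := #(perfectMatchings V) / (2 * k + 1) with hc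
  have hTx : T ⊆ V.erase x := subset_erase.2 ⟨hT, hxT⟩
  have hfiber : ∀ y ∈ V.erase x \ T,
      (#{g ∈ perfectMatchings (V \ {x, y}) | P (Equiv.swap x y ∘ g)} : ℝ) ≤ b * c := by
    intro y hy
    obtain ⟨⟨hyx, hyV⟩, hyT⟩ : (y ≠ x ∧ y ∈ V) ∧ y ∉ T := by simpa using hy
    have hcy : c = #(perfectMatchings (V \ {x, y})) := by
      rw [hc, card_perfectMatchings_eq_mul hk hx hyV hyx.symm]
      push_cast
      field_simp
    exact hcy ▸ h y (by simp [hyx, hyV]) hyT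
  have hcount : (#(V.erase x \ T) : ℝ) = 2 * k + 1 - #T := by
    rw [cast_card_sdiff hTx, card_erase_of_mem hx, hk]
    push_cast [Nat.add_sub_cancel, mul_add]
    ring
  calc (#{f ∈ perfectMatchings V | P f} : ℝ)
      = ∑ y ∈ V.erase x \ T,
          (#{g ∈ perfectMatchings (V \ {x, y}) | P (Equiv.swap x y ∘ g)} : ℝ) := by
        rw [card_filter_perfectMatchings_eq_sum_sdiff hx hP, Nat.cast_sum]
    _ ≤ (2 * k + 1 - #T) * (b * c) := by
        simpa only [nsmul_eq_mul, hcount] using sum_le_card_nsmul _ _ _ hfiber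
    _ = (1 - #T / (2 * k + 1)) * b * #(perfectMatchings V) := by
        rw [hc]
        field_simp
    _ ≤ (1 - #T / Fintype.card α) * b * #(perfectMatchings V) := by
        have : (2 * k + 1 : ℝ) ≤ Fintype.card α := by
          have := card_le_univ V
          exact_mod_cast (by omega : 2 * k + 1 ≤ Fintype.card α)
        gcongr

/-- The partners of points of `S` are revealed one at a time: if the partner `y` of `x ∈ S` is not
in `T`, then `x` and `y` use up at most two points of `S` and none of `T`. -/
lemma card_filter_perfectMatchings_forall_notMem_le {j : ℕ} (hV : Even #V) (hS : S ⊆ V)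
    (hT : T ⊆ V) (hST : Disjoint S T) (hj : 2 * j ≤ #S) :
    (#{f ∈ perfectMatchings V | ∀ z ∈ S, f z ∉ T} : ℝ) ≤
      (1 - #T / Fintype.card α) ^ j * #(perfectMatchings V) := by
  have hβ : (0 : ℝ) ≤ 1 - #T / Fintype.card α :=
    sub_nonneg.2 <| div_le_one_of_le₀ (mod_cast card_le_univ T) (by positivity)
  induction j generalizing V S with
  | zero => simpa using card_filter_le _ _
  | succ j ih =>
    obtain ⟨x, hxS⟩ : S.Nonempty := card_pos.1 (by omega)
    have hxT : x ∉ T := disjoint_left.1 hST hxS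
    rw [pow_succ']
    refine card_filter_perfectMatchings_le_of_partner hV (hS hxS) hT hxT (fun f hf => hf x hxS)
      (pow_nonneg hβ j) fun y hy hyT => ?_
    obtain ⟨hyx, hyV⟩ := mem_erase.1 hy
    have hVxy : Even #(V \ {x, y}) := by
      rw [card_sdiff_of_subset (by simp [insert_subset_iff, hS hxS, hyV]), card_pair hyx.symm]
      exact hV.tsub even_two
    have hSxy : #S - 2 ≤ #(S \ {x, y}) := by
      simpa [card_pair hyx.symm] using le_card_sdiff {x, y} S
    have hT' : T ⊆ V \ {x, y} := subset_sdiff.2 ⟨hT, by simp [hxT, hyT]⟩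
    refine le_trans ?_ (ih hVxy (sdiff_subset_sdiff hS subset_rfl) hT'
      (disjoint_of_subset_left sdiff_subset hST) (by omega))
    refine Nat.cast_le.2 (card_le_card fun g hg => ?_)
    obtain ⟨hg, havoid⟩ := mem_filter.1 hg
    refine mem_filter.2 ⟨hg, fun z hz hgz => havoid z (mem_sdiff.1 hz).1 ?_⟩
    rwa [Function.comp_apply, Equiv.swap_apply_of_ne_of_ne (ne_of_mem_of_not_mem hgz hxT)
      (ne_of_mem_of_not_mem hgz hyT)]

end PerfectMatchings

section RandomChordDiagram

variable {n : ℕ}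

lemma mem_perfectMatchings_univ_iff {f : Fin (2 * n) → Fin (2 * n)} :
    f ∈ perfectMatchings univ ↔ (∀ i, f (f i) = i) ∧ ∀ i, f i ≠ i := by
  simp [mem_perfectMatchings, Function.Involutive]

lemma uniformProb_chordDiagram (P : (Fin (2 * n) → Fin (2 * n)) → Prop) [DecidablePred P] :
    uniformProb (fun C : ChordDiagram n => P C.1) =
      #{f ∈ perfectMatchings univ | P f} / #(perfectMatchings (univ : Finset (Fin (2 * n)))) := by
  have hcard (Q : (Fin (2 * n) → Fin (2 * n)) → Prop) [DecidablePred Q] :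
      #{C : ChordDiagram n | Q C.1} = #{f ∈ perfectMatchings univ | Q f} := by
    refine card_nbij Subtype.val (fun C hC => ?_) Subtype.val_injective.injOn fun f hf => ?_
    · simp_all [mem_perfectMatchings_univ_iff, C.2]
    · obtain ⟨hf, hQ⟩ := mem_filter.1 hf
      exact ⟨⟨f, mem_perfectMatchings_univ_iff.1 hf⟩, by simpa using hQ, rfl⟩
  have htotal := hcard fun _ => True
  simp only [filter_true, card_univ] at htotal
  simp only [uniformProb]
  rw [htotal, ← hcard P]

lemma card_perfectMatchings_univ_pos (n : ℕ) :
    0 < #(perfectMatchings (univ : Finset (Fin (2 * n)))) := by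
  rw [card_perfectMatchings (card_fin _)]
  exact Nat.doubleFactorial_pos _

lemma nonempty_chordDiagram (n : ℕ) : Nonempty (ChordDiagram n) := by
  obtain ⟨f, hf⟩ := card_pos.1 (card_perfectMatchings_univ_pos n)
  exact ⟨⟨f, mem_perfectMatchings_univ_iff.1 hf⟩⟩

lemma uniformProb_chordDiagram_apply_eq_and_apply_eq (hn : 2 ≤ n) {a b c d : Fin (2 * n)}
    (hab : a ≠ b) (hcd : c ≠ d) (hca : c ≠ a) (hcb : c ≠ b) (hda : d ≠ a) (hdb : d ≠ b) :
    uniformProb (fun C : ChordDiagram n => C.1 a = b ∧ C.1 c = d) =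
      1 / ((2 * n - 1) * (2 * n - 3)) := by
  obtain ⟨k, rfl⟩ := Nat.exists_eq_add_of_le' hn
  have hcard := card_perfectMatchings_eq_mul_card_filter (card_fin (2 * (k + 2))) hab hcd
    (mem_univ a) (mem_univ b) (by simp [hca, hcb]) (by simp [hda, hdb])
  have hpos := card_perfectMatchings_univ_pos (k + 2)
  rw [uniformProb_chordDiagram fun f => f a = b ∧ f c = d]
  rw [hcard] at hpos ⊢
  have : 0 < #{f ∈ perfectMatchings univ | f a = b ∧ f c = d} := Nat.pos_of_mul_pos_left hpos
  have hfactors : ((2 * (k + 2 : ℕ) - 1) * (2 * (k + 2 : ℕ) - 3) : ℝ) =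
      (2 * k + 3) * (2 * k + 1) := by
    push_cast
    ring
  rw [hfactors]
  push_cast
  field_simp

lemma uniformProb_chordDiagram_forall_notMem_le {S T : Finset (Fin (2 * n))} (hST : Disjoint S T)
    {j : ℕ} (hj : 2 * j ≤ #S) :
    uniformProb (fun C : ChordDiagram n => ∀ x ∈ S, C.1 x ∉ T) ≤ (1 - #T / (2 * n)) ^ j := by
  have h := card_filter_perfectMatchings_forall_notMem_le (V := univ) (T := T) (by simp)
    (subset_univ S) (subset_univ T) hST hj
  push_cast [Fintype.card_fin] at h
  rw [uniformProb_chordDiagram fun f => ∀ x ∈ S, f x ∉ T]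
  refine (div_le_iff₀ (mod_cast card_perfectMatchings_univ_pos n)).2 (h.trans_eq' ?_)
  congr!

end RandomChordDiagram

section Blocks

variable {n : ℕ} {C : ChordDiagram n} {i t t' ℓ w m : ℕ}

/-- The block of `t` cyclically consecutive endpoints starting at `i`, modulo `2 * n`. -/
noncomputable def cyclicBlock (n i t : ℕ) : Finset (Fin (2 * n)) :=
  {x | ∃ a < t, (x : ℕ) = (i + a) % (2 * n)}

lemma mem_cyclicBlock {x : Fin (2 * n)} :
    x ∈ cyclicBlock n i t ↔ ∃ a < t, (x : ℕ) = (i + a) % (2 * n) := by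
  simp [cyclicBlock]

lemma card_cyclicBlock_le (n i t : ℕ) : #(cyclicBlock n i t) ≤ t := by
  have hmaps : Set.MapsTo Fin.val (cyclicBlock n i t : Set (Fin (2 * n)))
      ((range t).image fun a => (i + a) % (2 * n)) := by
    intro x hx
    obtain ⟨a, ha, hxa⟩ := mem_cyclicBlock.1 hx
    exact mem_image.2 ⟨a, mem_range.2 ha, hxa.symm⟩
  simpa using (card_le_card_of_injOn _ hmaps Fin.val_injective.injOn).trans card_image_le

lemma cyclicBlock_mono (h : t ≤ t') : cyclicBlock n i t ⊆ cyclicBlock n i t' := by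
  intro x hx
  obtain ⟨a, ha, hxa⟩ := mem_cyclicBlock.1 hx
  exact mem_cyclicBlock.2 ⟨a, ha.trans_le h, hxa⟩

lemma mem_cyclicBlock_of_le_of_lt {x : Fin (2 * n)} (hix : i ≤ x) (hxi : x < i + t) :
    x ∈ cyclicBlock n i t :=
  mem_cyclicBlock.2 ⟨x - i, by omega, by rw [Nat.add_sub_cancel' hix, Nat.mod_eq_of_lt x.2]⟩

lemma mem_cyclicBlock_of_add_lt {x : Fin (2 * n)} (hi : i < 2 * n) (hx : x + 2 * n < i + t) :
    x ∈ cyclicBlock n i t :=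
  mem_cyclicBlock.2 ⟨x + 2 * n - i, by omega, by
    rw [Nat.add_sub_cancel' (by omega), Nat.add_mod_right, Nat.mod_eq_of_lt x.2]⟩

lemma two_le_chordsInBlock_iff :
    2 ≤ chordsInBlock n C i t ↔ ∃ x ∈ cyclicBlock n i t, ∃ u ∈ cyclicBlock n i t,
      x < C.1 x ∧ u < C.1 u ∧ C.1 x ∈ cyclicBlock n i t ∧ C.1 u ∈ cyclicBlock n i t ∧ x ≠ u := by
  rw [← Nat.lt_iff_add_one_le, chordsInBlock, one_lt_card]
  simp only [mem_filter, mem_univ, true_and, ← mem_cyclicBlock]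
  grind

/-- Some block of `t` cyclically consecutive endpoints contains two chords of `C`. -/
def HasCrowdedBlock (t : ℕ) (C : ChordDiagram n) : Prop :=
  ∃ i < 2 * n, 2 ≤ chordsInBlock n C i t

lemma HasCrowdedBlock.mono (h : t ≤ t') (hC : HasCrowdedBlock t C) : HasCrowdedBlock t' C := by
  obtain ⟨i, hi, hcard⟩ := hC
  obtain ⟨x, hx, u, hu, hxC, huC, hCx, hCu, hxu⟩ := two_le_chordsInBlock_iff.1 hcard
  have hsub := cyclicBlock_mono (n := n) (i := i) h
  exact ⟨i, hi, two_le_chordsInBlock_iff.2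
    ⟨x, hsub hx, u, hsub hu, hxC, huC, hsub hCx, hsub hCu, hxu⟩⟩

lemma chordDiagram_injective (C : ChordDiagram n) : Function.Injective C.1 :=
  Function.Involutive.injective C.2.1

lemma uniformProb_exists_two_chords_mem_le (hn : 2 ≤ n) (B : Finset (Fin (2 * n))) :
    uniformProb (fun C : ChordDiagram n => ∃ x ∈ B, ∃ u ∈ B,
      x < C.1 x ∧ u < C.1 u ∧ C.1 x ∈ B ∧ C.1 u ∈ B ∧ x ≠ u) ≤
        #B ^ 4 * (1 / ((2 * n - 1) * (2 * n - 3))) := by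
  have hn' : (2 : ℝ) ≤ n := mod_cast hn
  have hpos : (0 : ℝ) < (2 * n - 1) * (2 * n - 3) := mul_pos (by linarith) (by linarith)
  let Q : Finset (Fin (2 * n) × Fin (2 * n) × Fin (2 * n) × Fin (2 * n)) :=
    {q ∈ B ×ˢ B ×ˢ B ×ˢ B | q.1 ≠ q.2.1 ∧ q.2.2.1 ≠ q.2.2.2 ∧ q.2.2.1 ≠ q.1 ∧
      q.2.2.1 ≠ q.2.1 ∧ q.2.2.2 ≠ q.1 ∧ q.2.2.2 ≠ q.2.1}
  have hQ : #Q ≤ #B ^ 4 := by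
    calc #Q ≤ #(B ×ˢ B ×ˢ B ×ˢ B) := card_filter_le _ _
      _ = #B ^ 4 := by simp only [card_product]; ring
  have hpairs : uniformProb (fun C : ChordDiagram n =>
      ∃ q ∈ Q, C.1 q.1 = q.2.1 ∧ C.1 q.2.2.1 = q.2.2.2) ≤
        #Q * (1 / ((2 * n - 1) * (2 * n - 3))) := by
    refine uniformProb_exists_mem_le _ _ fun q hq => ?_
    obtain ⟨-, hab, hcd, hca, hcb, hda, hdb⟩ := mem_filter.1 hq
    exact (uniformProb_chordDiagram_apply_eq_and_apply_eq hn hab hcd hca hcb hda hdb).le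
  refine (uniformProb_mono fun C hC => ?_).trans
    (hpairs.trans (by gcongr; exact_mod_cast hQ))
  obtain ⟨x, hx, u, hu, hxC, huC, hCx, hCu, hxu⟩ := hC
  have hu_ne : u ≠ C.1 x := by
    rintro rfl
    exact absurd huC (by simp [C.2.1, hxC.le])
  have hx_ne : C.1 u ≠ x := fun h => hu_ne (by rw [← h, C.2.1])
  exact ⟨(x, C.1 x, u, C.1 u), mem_filter.2 ⟨by simp [*], hxC.ne, huC.ne, hxu.symm, hu_ne, hx_ne,
    (chordDiagram_injective C).ne hxu.symm⟩, rfl, rfl⟩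

lemma uniformProb_hasCrowdedBlock_le (hn : 2 ≤ n) (t : ℕ) :
    uniformProb (HasCrowdedBlock (n := n) t) ≤
      2 * n * (t ^ 4 * (1 / ((2 * n - 1) * (2 * n - 3)))) := by
  have hn' : (2 : ℝ) ≤ n := mod_cast hn
  have hpos : (0 : ℝ) < (2 * n - 1) * (2 * n - 3) := mul_pos (by linarith) (by linarith)
  have hblock (i : ℕ) : uniformProb (fun C : ChordDiagram n => 2 ≤ chordsInBlock n C i t) ≤
      t ^ 4 * (1 / ((2 * n - 1) * (2 * n - 3))) := by
    simp only [two_le_chordsInBlock_iff]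
    refine (uniformProb_exists_two_chords_mem_le hn _).trans ?_
    gcongr
    exact card_cyclicBlock_le n i t
  have hunion := uniformProb_exists_mem_le (range (2 * n)) _ fun i _ => hblock i
  simp only [mem_range, card_range] at hunion
  exact_mod_cast hunion

/-- The endpoints `u, u + 1, …, u + ℓ - 1`. -/
noncomputable def endpointInterval (n u ℓ : ℕ) : Finset (Fin (2 * n)) :=
  {x | u ≤ x ∧ x < u + ℓ}

lemma mem_endpointInterval {u : ℕ} {x : Fin (2 * n)} :
    x ∈ endpointInterval n u ℓ ↔ u ≤ x ∧ x < u + ℓ := by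
  simp [endpointInterval]

lemma card_endpointInterval {u : ℕ} (hu : u + ℓ ≤ 2 * n) : #(endpointInterval n u ℓ) = ℓ := by
  have himage : (endpointInterval n u ℓ).map Fin.valEmbedding = Ico u (u + ℓ) := by
    ext k
    simp only [Finset.mem_map, mem_endpointInterval, Fin.valEmbedding_apply, mem_Ico]
    exact ⟨fun ⟨_, hx, hxk⟩ => hxk ▸ hx, fun hk => ⟨⟨k, by omega⟩, hk, rfl⟩⟩
  simpa using congrArg card himage

/-- Some two disjoint intervals of endpoints, of lengths `ℓ` and `w`, are not joined by any chord
of `C`. -/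
def HasUnjoinedIntervals (ℓ w : ℕ) (C : ChordDiagram n) : Prop :=
  ∃ u v, u + ℓ ≤ 2 * n ∧ v + w ≤ 2 * n ∧
    Disjoint (endpointInterval n u ℓ) (endpointInterval n v w) ∧
    ∀ x ∈ endpointInterval n u ℓ, C.1 x ∉ endpointInterval n v w

lemma uniformProb_hasUnjoinedIntervals_le (hw : w ≤ 2 * n) :
    uniformProb (HasUnjoinedIntervals (n := n) (2 * m) w) ≤
      (2 * n + 1) ^ 2 * (1 - w / (2 * n)) ^ m := by
  have hβ : (0 : ℝ) ≤ 1 - w / (2 * n) :=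
    sub_nonneg.2 <| div_le_one_of_le₀ (mod_cast hw) (by positivity)
  have hunion := uniformProb_exists_mem_le (range (2 * n + 1) ×ˢ range (2 * n + 1))
    (fun q (C : ChordDiagram n) => (q.1 + 2 * m ≤ 2 * n ∧ q.2 + w ≤ 2 * n ∧
      Disjoint (endpointInterval n q.1 (2 * m)) (endpointInterval n q.2 w)) ∧
      ∀ x ∈ endpointInterval n q.1 (2 * m), C.1 x ∉ endpointInterval n q.2 w)
    (ε := (1 - w / (2 * n)) ^ m) ?_
  · simp only [card_product, card_range, ← sq] at hunion
    push_cast at hunion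
    refine (uniformProb_mono fun C => ?_).trans hunion
    rintro ⟨u, v, hu, hv, hdisj, hC⟩
    exact ⟨(u, v), by simp only [mem_product, mem_range]; omega, ⟨hu, hv, hdisj⟩, hC⟩
  · rintro ⟨u, v⟩ -
    by_cases h : u + 2 * m ≤ 2 * n ∧ v + w ≤ 2 * n ∧
      Disjoint (endpointInterval n u (2 * m)) (endpointInterval n v w)
    · obtain ⟨hu, hv, hdisj⟩ := h
      refine (uniformProb_mono fun C hC => hC.2).trans ?_
      simpa [card_endpointInterval hv] using
        uniformProb_chordDiagram_forall_notMem_le hdisj (card_endpointInterval hu).ge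
    · simpa [h, uniformProb] using pow_nonneg hβ m

/-- Cut the first interval into `q` pieces of length `ℓ`: each of them is joined to the second. -/
lemma le_card_filter_of_not_hasUnjoinedIntervals (h : ¬ HasUnjoinedIntervals ℓ w C) {q u v : ℕ}
    (hu : u + q * ℓ ≤ 2 * n) (hv : v + w ≤ 2 * n)
    (hdisj : Disjoint (endpointInterval n u (q * ℓ)) (endpointInterval n v w)) :
    q ≤ #{x ∈ endpointInterval n u (q * ℓ) | C.1 x ∈ endpointInterval n v w} := by
  have hsurj : Set.SurjOn (fun x : Fin (2 * n) => ((x : ℕ) - u) / ℓ)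
      ({x ∈ endpointInterval n u (q * ℓ) | C.1 x ∈ endpointInterval n v w} :
        Finset (Fin (2 * n))) (range q) := by
    intro k hk
    have hkq : k * ℓ + ℓ ≤ q * ℓ := by
      simpa [Nat.succ_mul] using Nat.mul_le_mul_right ℓ (mem_range.1 hk)
    have hsub : endpointInterval n (u + k * ℓ) ℓ ⊆ endpointInterval n u (q * ℓ) := by
      intro x
      simp only [mem_endpointInterval]
      omega
    obtain ⟨x, hx, hCx⟩ : ∃ x ∈ endpointInterval n (u + k * ℓ) ℓ,
        C.1 x ∈ endpointInterval n v w := by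
      by_contra! hcon
      exact h ⟨u + k * ℓ, v, by omega, hv, disjoint_of_subset_left hsub hdisj, hcon⟩
    refine ⟨x, mem_filter.2 ⟨hsub hx, hCx⟩, ?_⟩
    rw [mem_endpointInterval] at hx
    exact Nat.div_eq_of_lt_le (by omega) (by rw [add_one_mul]; omega)
  simpa using card_le_card_of_surjOn _ hsurj

end Blocks

section Chords

/-- Exactly one of `i` and `j` lies strictly between `a` and `b`: for `a < b`, the chords with
endpoints `a`, `b` and `i`, `j` cross. -/
def Separates (a b i j : ℕ) : Prop :=
  ((a < i ∧ i < b) ∧ ¬ (a < j ∧ j < b)) ∨ ((a < j ∧ j < b) ∧ ¬ (a < i ∧ i < b))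

variable {n : ℕ} {C : ChordDiagram n} {K : ℕ} {x u : Fin (2 * n)}

lemma crosses_iff_separates :
    Crosses C x u ↔ Separates (min x (C.1 x)) (max x (C.1 x)) u (C.1 u) := by
  rw [← Fin.coe_min, ← Fin.coe_max]
  exact Iff.rfl

lemma crosses_apply_left_iff : Crosses C (C.1 x) u ↔ Crosses C x u := by
  simp only [Crosses, Between, C.2.1, min_comm, max_comm]

lemma crosses_apply_right_iff : Crosses C x (C.1 u) ↔ Crosses C x u := by
  rw [Crosses, C.2.1]
  exact iff_of_eq (xor_comm _ _)

lemma Crosses.ne (h : Crosses C x u) : u ≠ x := by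
  rintro rfl
  rw [crosses_iff_separates, Separates] at h
  omega

lemma Crosses.ne_apply (h : Crosses C x u) : u ≠ C.1 x := by
  rintro rfl
  exact (crosses_apply_right_iff.1 h).ne rfl

lemma apply_lt_of_not_lt_apply (h : ¬ x < C.1 x) : C.1 x < C.1 (C.1 x) := by
  rw [C.2.1]
  exact lt_of_le_of_ne (not_lt.1 h) (C.2.2 x)

lemma crosses_iff_of_lt (hx : x < C.1 x) (hu : u < C.1 u) :
    Crosses C x u ↔
      (x < u ∧ u < C.1 x ∧ C.1 x < C.1 u) ∨ (u < x ∧ x < C.1 u ∧ C.1 u < C.1 x) := by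
  have heq : C.1 u = C.1 x ↔ u = x := (chordDiagram_injective C).eq_iff
  have heq' : C.1 u = x ↔ u = C.1 x := Function.Involutive.eq_iff C.2.1
  rw [crosses_iff_separates, Separates]
  simp only [Fin.lt_def, Fin.ext_iff, ne_eq] at *
  omega

lemma Crosses.symm (h : Crosses C x u) : Crosses C u x := by
  wlog hx : x < C.1 x generalizing x
  · exact crosses_apply_right_iff.1
      (this (crosses_apply_left_iff.2 h) (apply_lt_of_not_lt_apply hx))
  wlog hu : u < C.1 u generalizing u
  · exact crosses_apply_left_iff.1
      (this (crosses_apply_right_iff.2 h) (apply_lt_of_not_lt_apply hu))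
  exact (crosses_iff_of_lt hu hx).2 ((crosses_iff_of_lt hx hu).1 h).symm

lemma chordRep_apply : chordRep C (C.1 x) = chordRep C x := by
  rw [chordRep, chordRep, C.2.1, min_comm]

lemma chordRep_eq_chordRep_iff : chordRep C x = chordRep C u ↔ u = x ∨ u = C.1 x := by
  constructor
  · intro h
    rcases min_choice x (C.1 x) with hx | hx <;> rcases min_choice u (C.1 u) with hu | hu <;>
      rw [chordRep, chordRep, hx, hu] at h
    · exact .inl h.symm
    · exact .inr (by rw [h, C.2.1])
    · exact .inr h.symm
    · exact .inl (chordDiagram_injective C h.symm)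
  · rintro (rfl | rfl)
    · rfl
    · exact chordRep_apply.symm

lemma Crosses.chordRep_ne (h : Crosses C x u) : chordRep C x ≠ chordRep C u := fun hrep =>
  (chordRep_eq_chordRep_iff.1 hrep).elim h.ne h.ne_apply

lemma chordLength_apply : chordLength C (C.1 x) = chordLength C x := by
  simp only [chordLength, C.2.1, min_comm, max_comm]

/-- The short arcs of the two chords overlap, so together they form a single arc, of at most `2 * K`
endpoints. -/
lemma exists_cyclicBlock_of_alternating (hxu : x < u) (hu : u < C.1 x) (hCx : C.1 x < C.1 u)
    (hxK : chordLength C x < K) (huK : chordLength C u < K) :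
    ∃ i < 2 * n, ∀ z ∈ ({x, u, C.1 x, C.1 u} : Finset (Fin (2 * n))),
      z ∈ cyclicBlock n i (2 * K) := by
  have hmem {i : ℕ} (hi : i < 2 * n) {z : Fin (2 * n)}
      (hz : (i ≤ z ∧ z < i + 2 * K) ∨ z + 2 * n < i + 2 * K) : z ∈ cyclicBlock n i (2 * K) :=
    hz.elim (fun h => mem_cyclicBlock_of_le_of_lt h.1 h.2) (mem_cyclicBlock_of_add_lt hi)
  simp only [mem_insert, mem_singleton, forall_eq_or_imp, forall_eq]
  simp only [chordLength, Fin.lt_def, min_lt_iff] at *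
  rcases hxK with hxK | hxK <;> rcases huK with huK | huK
  · refine ⟨x, x.2, ?_, ?_, ?_, ?_⟩ <;> exact hmem x.2 (by omega)
  · refine ⟨C.1 u, (C.1 u).2, ?_, ?_, ?_, ?_⟩ <;> exact hmem (C.1 u).2 (by omega)
  · refine ⟨u, u.2, ?_, ?_, ?_, ?_⟩ <;> exact hmem u.2 (by omega)
  · refine ⟨C.1 x, (C.1 x).2, ?_, ?_, ?_, ?_⟩ <;> exact hmem (C.1 x).2 (by omega)

lemma Crosses.hasCrowdedBlock (h : Crosses C x u) (hxK : chordLength C x < K)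
    (huK : chordLength C u < K) : HasCrowdedBlock (2 * K) C := by
  wlog hx : x < C.1 x generalizing x
  · exact this (crosses_apply_left_iff.2 h) (by rwa [chordLength_apply])
      (apply_lt_of_not_lt_apply hx)
  wlog hu : u < C.1 u generalizing u
  · exact this (by rwa [chordLength_apply]) (crosses_apply_right_iff.2 h)
      (apply_lt_of_not_lt_apply hu)
  obtain ⟨i, hi, hblock⟩ : ∃ i < 2 * n, ∀ z ∈ ({x, u, C.1 x, C.1 u} : Finset (Fin (2 * n))),
      z ∈ cyclicBlock n i (2 * K) := by
    rcases (crosses_iff_of_lt hx hu).1 h with ⟨hxu, hux, hCx⟩ | ⟨hux, hxu, hCu⟩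
    · exact exists_cyclicBlock_of_alternating hxu hux hCx hxK huK
    · obtain ⟨i, hi, hblock⟩ := exists_cyclicBlock_of_alternating hux hxu hCu huK hxK
      exact ⟨i, hi, fun z hz => hblock z (by grind)⟩
  exact ⟨i, hi, two_le_chordsInBlock_iff.2 ⟨x, hblock x (by simp), u, hblock u (by simp), hx, hu,
    hblock _ (by simp), hblock _ (by simp), h.ne.symm⟩⟩

end Chords

section Reachability

variable {n : ℕ} {D : OrientedChordDiagram n} {x u v : Fin (2 * n)}

lemma overD_apply_right_iff : OverD D x (D.1.1 u) ↔ OverD D x u := by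
  simp only [OverD, crosses_apply_right_iff, chordRep_apply]

lemma OverD.reachChord (h : OverD D x u) : ReachChord D x u :=
  .inr (.inr (.single h))

lemma ReachChord.apply_right (h : ReachChord D x u) : ReachChord D x (D.1.1 u) := by
  rcases h with rfl | rfl | h
  · exact .inr (.inl rfl)
  · exact .inl (D.1.2.1 x)
  · rcases Relation.ReflTransGen.cases_tail h with rfl | ⟨y, hxy, hyu⟩
    · exact .inr (.inl rfl)
    · exact .inr (.inr (hxy.tail (overD_apply_right_iff.2 hyu)))

lemma overD_apply_left_iff : OverD D (D.1.1 x) u ↔ OverD D x u := by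
  simp only [OverD, crosses_apply_left_iff, chordRep_apply]

lemma ReachChord.tail (h : ReachChord D x u) (huv : OverD D u v) : ReachChord D x v := by
  rcases h with rfl | rfl | h
  · exact huv.reachChord
  · exact (overD_apply_left_iff.1 huv).reachChord
  · exact .inr (.inr (h.tail huv))

lemma ReachChord.trans (h : ReachChord D x u) (h' : ReachChord D u v) : ReachChord D x v := by
  rcases h' with rfl | rfl | h'
  · exact h
  · exact h.apply_right
  · induction h' with
    | refl => exact h
    | tail _ hyz ih => exact ih.tail hyz

lemma MutualReach.symm (h : MutualReach D x u) : MutualReach D u x := And.symm h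

lemma MutualReach.trans (h : MutualReach D x u) (h' : MutualReach D u v) : MutualReach D x v :=
  ⟨h.1.trans h'.1, h'.2.trans h.2⟩

lemma MutualReach.exists_crosses (h : MutualReach D x u) (hux : u ≠ x) (hux' : u ≠ D.1.1 x) :
    ∃ y, Crosses D.1 x y ∧ MutualReach D x y := by
  obtain ⟨rfl | rfl | hxu, hux⟩ := h
  · contradiction
  · contradiction
  · rcases Relation.ReflTransGen.cases_head hxu with rfl | ⟨y, hxy, hyu⟩
    · contradiction
    · exact ⟨y, hxy.1, hxy.reachChord, .trans (.inr (.inr hyu)) hux⟩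

/-- All chords in strong components of size larger than 1 lie in one strong component. -/
def AtMostOneNontrivialComponent (D : OrientedChordDiagram n) : Prop :=
  ∀ x y : Fin (2 * n),
    (∃ u, u ≠ x ∧ u ≠ D.1.1 x ∧ MutualReach D x u) →
    (∃ v, v ≠ y ∧ v ≠ D.1.1 y ∧ MutualReach D y v) →
    MutualReach D x y

/-- A chord in a nontrivial component crosses a chord of that component, and one of the two is
long. -/
lemma atMostOneNontrivialComponent_of_forall_mutualReach {K : ℕ} {p : Fin (2 * n)}
    (hD : ¬ HasCrowdedBlock (2 * K) D.1) (hp : ∀ x, K ≤ chordLength D.1 x → MutualReach D x p) :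
    AtMostOneNontrivialComponent D := by
  have hreach : ∀ x, (∃ u, u ≠ x ∧ u ≠ D.1.1 x ∧ MutualReach D x u) → MutualReach D x p := by
    rintro x ⟨u, hux, hux', hxu⟩
    obtain ⟨y, hcross, hxy⟩ := hxu.exists_crosses hux hux'
    by_cases hx : K ≤ chordLength D.1 x
    · exact hp x hx
    · have hy : K ≤ chordLength D.1 y := by
        by_contra hy
        exact hD (hcross.hasCrowdedBlock (not_le.1 hx) (not_le.1 hy))
      exact hxy.trans (hp y hy)
  exact fun x y hx hy => (hreach x hx).trans (hreach y hy).symm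

end Reachability

section Geometry

variable {n k ℓ m w a b p t : ℕ} {C : ChordDiagram n} {x y : Fin (2 * n)}

/-- In each configuration of the two chords, two of the arcs cut out by their endpoints are long
enough and lie on opposite sides of both chords. -/
lemma exists_intervals_separates_of_nested (hw : 10 * w ≤ n) (hab : a < b) (hb : b < 2 * n)
    (hpk : p < k) (htn : t < n) (hnt : n ≤ t + w) (hlen : 4 * k + a ≤ b)
    (hlen' : b + 4 * k ≤ a + 2 * n)
    (h : (a < p ∧ t < b) ∨ (p < a ∧ b < t) ∨ t < a) :
    ∃ u v, u + k ≤ 2 * n ∧ v + w ≤ 2 * n ∧ (u + k ≤ v ∨ v + w ≤ u) ∧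
      ∀ i j, u ≤ i → i < u + k → v ≤ j → j < v + w → Separates a b i j ∧ Separates p t i j := by
  unfold Separates
  rcases h with ⟨hap, htb⟩ | ⟨hpa, hbt⟩ | hta
  · exact ⟨b + 1, p + 1, by omega, by omega, by omega, by omega⟩
  · exact ⟨a + 1, t + 1, by omega, by omega, by omega, by omega⟩
  · exact ⟨a + 1, p + 1, by omega, by omega, by omega, by omega⟩

lemma exists_intervals_separates_of_alternating (hk : 10 * k ≤ w) (hw : 10 * w ≤ n)
    (hb : b < 2 * n) (hpk : p < k) (htn : t < n) (hnt : n ≤ t + w) (hlen : 4 * k + a ≤ b)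
    (hlen' : b + 4 * k ≤ a + 2 * n)
    (h : (a < p ∧ p < b ∧ b < t) ∨ (p < a ∧ a < t ∧ t < b)) :
    ∃ u v, u + k ≤ 2 * n ∧ v + w ≤ 2 * n ∧ (u + k ≤ v ∨ v + w ≤ u) ∧
      ∀ i j, u ≤ i → i < u + k → v ≤ j → j < v + w → Separates a b i j ∧ Separates p t i j := by
  unfold Separates
  rcases h with ⟨hap, hpb, hbt⟩ | ⟨hpa, hat, htb⟩
  · exact ⟨p + 1, t + 1, by omega, by omega, by omega, by omega⟩
  by_cases hwat : w + a + 1 ≤ t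
  · by_cases hkb : b + 1 + k ≤ 2 * n
    · exact ⟨b + 1, a + 1, by omega, by omega, by omega, by omega⟩
    · exact ⟨p + 1, t + 1, by omega, by omega, by omega, by omega⟩
  · by_cases hktb : t + 1 + k ≤ b
    · exact ⟨t + 1, p + 1, by omega, by omega, by omega, by omega⟩
    · exact ⟨a + 1, b + 1, by omega, by omega, by omega, by omega⟩

lemma exists_intervals_separates (hk : 10 * k ≤ w) (hw : 10 * w ≤ n) (hab : a < b)
    (hb : b < 2 * n) (hpk : p < k) (htn : t < n) (hnt : n ≤ t + w) (hlen : 4 * k + a ≤ b)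
    (hlen' : b + 4 * k ≤ a + 2 * n) (hap : a ≠ p) (hat : a ≠ t) (hbp : b ≠ p) (hbt : b ≠ t) :
    ∃ u v, u + k ≤ 2 * n ∧ v + w ≤ 2 * n ∧ (u + k ≤ v ∨ v + w ≤ u) ∧
      ∀ i j, u ≤ i → i < u + k → v ≤ j → j < v + w → Separates a b i j ∧ Separates p t i j := by
  by_cases h : (a < p ∧ t < b) ∨ (p < a ∧ b < t) ∨ t < a
  · exact exists_intervals_separates_of_nested hw hab hb hpk htn hnt hlen hlen' h
  · exact exists_intervals_separates_of_alternating hk hw hb hpk htn hnt hlen hlen' (by omega)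

/-- The chord of `p` joins one of the first `k` endpoints to one of the `w` endpoints preceding the
antipode of endpoint `0`. Such a nearly diametral chord is what all long chords will be linked
to. -/
def IsPivot (k w : ℕ) (C : ChordDiagram n) (p : Fin (2 * n)) : Prop :=
  p < k ∧ C.1 p < n ∧ n ≤ C.1 p + w

lemma exists_isPivot (h : ¬ HasUnjoinedIntervals k w C) (hkw : k + w ≤ n) :
    ∃ p, IsPivot k w C p := by
  by_contra! hcon
  refine h ⟨0, n - w, by omega, by omega, disjoint_left.2 fun x hx hx' => ?_, fun x hx hCx => ?_⟩
  · simp only [mem_endpointInterval] at hx hx'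
    omega
  · simp only [mem_endpointInterval] at hx hCx
    exact hcon x ⟨by omega, by omega, by omega⟩

lemma IsPivot.mono {k' : ℕ} (hp : IsPivot k w C x) (h : k ≤ k') : IsPivot k' w C x :=
  ⟨hp.1.trans_le h, hp.2⟩

lemma IsPivot.exists_intervals_crosses (hp : IsPivot k w C y) (hk : 10 * k ≤ w) (hw : 10 * w ≤ n)
    (hx : 4 * k ≤ chordLength C x) (hxy : x ≠ y) (hxy' : x ≠ C.1 y) :
    ∃ u v, u + k ≤ 2 * n ∧ v + w ≤ 2 * n ∧
      Disjoint (endpointInterval n u k) (endpointInterval n v w) ∧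
      ∀ e ∈ endpointInterval n u k, C.1 e ∈ endpointInterval n v w →
        Crosses C x e ∧ Crosses C y e := by
  have hCxy : C.1 x ≠ y := fun h => hxy' (by rw [← h, C.2.1])
  have hCxy' : C.1 x ≠ C.1 y := (chordDiagram_injective C).ne hxy
  have hxC : x ≠ C.1 x := (C.2.2 x).symm
  obtain ⟨hyk, hyn, hny⟩ := hp
  simp only [chordLength, ne_eq, Fin.ext_iff] at hx hxy hxy' hCxy hCxy' hxC
  have hyC : (y : ℕ) < C.1 y := by omega
  obtain ⟨u, v, hu, hv, huv, hsep⟩ := exists_intervals_separates (a := min x (C.1 x))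
    (b := max x (C.1 x)) hk hw (by omega) (by omega) hyk hyn hny (by omega) (by omega) (by omega)
    (by omega) (by omega) (by omega)
  refine ⟨u, v, hu, hv, disjoint_left.2 fun e he he' => ?_, fun e he hCe => ?_⟩
  · rw [mem_endpointInterval] at he he'
    omega
  · rw [mem_endpointInterval] at he hCe
    obtain ⟨hxe, hye⟩ := hsep e (C.1 e) he.1 he.2 hCe.1 hCe.2
    refine ⟨crosses_iff_separates.2 hxe, crosses_iff_separates.2 ?_⟩
    rwa [min_eq_left hyC.le, max_eq_right hyC.le]

lemma IsPivot.exists_common_crossings (hC : ¬ HasUnjoinedIntervals ℓ w C)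
    (hp : IsPivot (m * ℓ) w C y) (hk : 10 * (m * ℓ) ≤ w) (hw : 10 * w ≤ n)
    (hx : 4 * (m * ℓ) ≤ chordLength C x) (hxy : x ≠ y) (hxy' : x ≠ C.1 y) :
    ∃ E : Finset (Fin (2 * n)), m ≤ #E ∧ Set.InjOn (chordRep C) E ∧
      ∀ e ∈ E, Crosses C x e ∧ Crosses C y e := by
  obtain ⟨u, v, hu, hv, hdisj, hcross⟩ := hp.exists_intervals_crosses hk hw hx hxy hxy'
  refine ⟨{e ∈ endpointInterval n u (m * ℓ) | C.1 e ∈ endpointInterval n v w},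
    le_card_filter_of_not_hasUnjoinedIntervals hC hu hv hdisj, fun e he e' he' hrep => ?_, ?_⟩
  · simp only [coe_filter, Set.mem_ofPred_eq] at he he'
    rcases chordRep_eq_chordRep_iff.1 hrep with rfl | rfl
    · rfl
    · exact absurd he.2 (disjoint_left.1 hdisj he'.1)
  · simpa using hcross

end Geometry

section CoinsOfDiagrams

variable {n m : ℕ} {C : ChordDiagram n} {x y u v : Fin (2 * n)}

/-- The index of the coin that orients the crossing of the chords of `x` and `u`. -/
def coinIndex (C : ChordDiagram n) (x u : Fin (2 * n)) : Fin (2 * n) × Fin (2 * n) :=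
  (min (chordRep C x) (chordRep C u), max (chordRep C x) (chordRep C u))

lemma coinIndex_eq_coinIndex_iff :
    coinIndex C x u = coinIndex C y v ↔
      chordRep C x = chordRep C y ∧ chordRep C u = chordRep C v ∨
        chordRep C x = chordRep C v ∧ chordRep C u = chordRep C y := by
  rw [← Sym2.eq_iff, ← Sym2.inf_eq_inf_and_sup_eq_sup, coinIndex, coinIndex, Prod.mk_inj]
  rfl

lemma overD_curry_iff {ω : Fin (2 * n) × Fin (2 * n) → Bool} :
    OverD (C, Function.curry ω) x u ↔
      Crosses C x u ∧ ω (coinIndex C x u) = decide (chordRep C x ≤ chordRep C u) := by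
  rcases le_or_gt (chordRep C x) (chordRep C u) with h | h
  · simp [OverD, coinIndex, h, h.not_gt]
  · simp [OverD, coinIndex, h, h.not_ge, h.le]

/-- Each common crossing provides a path of length two governed by two coins of its own. -/
lemma uniformProb_forall_not_overD_and_overD_le (hxy : chordRep C x ≠ chordRep C y)
    {E : Finset (Fin (2 * n))} (hinj : Set.InjOn (chordRep C) E)
    (hE : ∀ e ∈ E, Crosses C x e ∧ Crosses C y e) :
    uniformProb (fun ω => ∀ e, ¬ (OverD (C, ω) x e ∧ OverD (C, ω) e y)) ≤ (3 / 4) ^ #E := by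
  have hx (e) (he : e ∈ E) : chordRep C x ≠ chordRep C e := (hE e he).1.chordRep_ne
  have hy (e) (he : e ∈ E) : chordRep C y ≠ chordRep C e := (hE e he).2.chordRep_ne
  have hinj_left : Set.InjOn (coinIndex C x) E := fun e he e' he' h =>
    (coinIndex_eq_coinIndex_iff.1 h).elim (fun h => hinj he he' h.2) fun h => absurd h.1 (hx e' he')
  have hinj_right : Set.InjOn (fun e => coinIndex C e y) E := fun e he e' he' h =>
    (coinIndex_eq_coinIndex_iff.1 h).elim (fun h => hinj he he' h.1)
      fun h => absurd h.2 (hy e' he')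
  have hdisj (e) (_ : e ∈ E) (e') (he' : e' ∈ E) : coinIndex C x e ≠ coinIndex C e' y := fun h =>
    (coinIndex_eq_coinIndex_iff.1 h).elim (fun h => hx e' he' h.1) fun h => hxy h.1
  rw [← uniformProb_comp_equiv (Equiv.curry _ _ _),
    ← uniformProb_forall_not_coin_pair_eq E hinj_left hinj_right hdisj
      (fun e => decide (chordRep C x ≤ chordRep C e)) fun e => decide (chordRep C e ≤ chordRep C y)]
  refine uniformProb_mono fun ω hω e he hcoins => hω e ?_
  exact ⟨overD_curry_iff.2 ⟨(hE e he).1, hcoins.1⟩,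
    overD_curry_iff.2 ⟨(hE e he).2.symm, hcoins.2⟩⟩

lemma uniformProb_not_reachChord_le (hxy : x ≠ y) (hxy' : x ≠ C.1 y)
    {E : Finset (Fin (2 * n))} (hm : m ≤ #E) (hinj : Set.InjOn (chordRep C) E)
    (hE : ∀ e ∈ E, Crosses C x e ∧ Crosses C y e) :
    uniformProb (fun ω => ¬ ReachChord (C, ω) x y) ≤ (3 / 4) ^ m := by
  have hrep : chordRep C x ≠ chordRep C y := fun h => by
    rcases chordRep_eq_chordRep_iff.1 h.symm with h | h <;> contradiction
  calc uniformProb (fun ω => ¬ ReachChord (C, ω) x y)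
      ≤ uniformProb (fun ω => ∀ e, ¬ (OverD (C, ω) x e ∧ OverD (C, ω) e y)) :=
        uniformProb_mono fun ω hω e he => hω (he.1.reachChord.tail he.2)
    _ ≤ (3 / 4) ^ #E := uniformProb_forall_not_overD_and_overD_le hrep hinj hE
    _ ≤ (3 / 4) ^ m := pow_le_pow_of_le_one (by norm_num) (by norm_num) hm

lemma uniformProb_not_mutualReach_le (hxy : x ≠ y) (hxy' : x ≠ C.1 y)
    {E : Finset (Fin (2 * n))} (hm : m ≤ #E) (hinj : Set.InjOn (chordRep C) E)
    (hE : ∀ e ∈ E, Crosses C x e ∧ Crosses C y e) :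
    uniformProb (fun ω => ¬ MutualReach (C, ω) x y) ≤ 2 * (3 / 4) ^ m := by
  have hyx : y ≠ C.1 x := fun h => hxy' (by rw [h, C.2.1])
  simp only [MutualReach, not_and_or]
  calc _ ≤ _ := uniformProb_or_le _ _
    _ ≤ (3 / 4) ^ m + (3 / 4) ^ m :=
      add_le_add (uniformProb_not_reachChord_le hxy hxy' hm hinj hE)
        (uniformProb_not_reachChord_le hxy.symm hyx hm hinj fun e he => (hE e he).symm)
    _ = 2 * (3 / 4) ^ m := (two_mul _).symm

lemma IsPivot.uniformProb_exists_not_mutualReach_le {ℓ w : ℕ} (hy : IsPivot (m * ℓ) w C y)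
    (hC : ¬ HasUnjoinedIntervals ℓ w C) (hk : 10 * (m * ℓ) ≤ w) (hw : 10 * w ≤ n) :
    uniformProb (fun ω => ∃ x, 4 * (m * ℓ) ≤ chordLength C x ∧ ¬ MutualReach (C, ω) x y) ≤
      4 * n * (3 / 4) ^ m := by
  set long : Finset (Fin (2 * n)) := {x | 4 * (m * ℓ) ≤ chordLength C x}
  have hlong (x) (hx : x ∈ long) :
      uniformProb (fun ω => ¬ MutualReach (C, ω) x y) ≤ 2 * (3 / 4) ^ m := by
    by_cases hxy : x = y ∨ x = C.1 y
    · have hreach (ω) : MutualReach (C, ω) x y := by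
        rcases hxy with rfl | rfl
        · exact ⟨.inl rfl, .inl rfl⟩
        · exact ⟨.inr (.inl (C.2.1 y).symm), .inr (.inl rfl)⟩
      have hzero : uniformProb (fun ω => ¬ MutualReach (C, ω) x y) = 0 := by
        simp [uniformProb, hreach]
      rw [hzero]
      positivity
    · obtain ⟨hxy, hxy'⟩ := not_or.1 hxy
      obtain ⟨E, hm, hinj, hE⟩ :=
        hy.exists_common_crossings hC hk hw (mem_filter.1 hx).2 hxy hxy'
      exact uniformProb_not_mutualReach_le hxy hxy' hm hinj hE
  calc _ = uniformProb (fun ω => ∃ x ∈ long, ¬ MutualReach (C, ω) x y) := by simp [long]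
    _ ≤ #long * (2 * (3 / 4) ^ m) := uniformProb_exists_mem_le long _ hlong
    _ ≤ (2 * n : ℕ) * (2 * (3 / 4) ^ m) := by
      gcongr
      exact card_le_univ long |>.trans_eq (Fintype.card_fin _)
    _ = 4 * n * (3 / 4) ^ m := by push_cast; ring

end CoinsOfDiagrams

section NthRoot

variable {j k : ℕ}

lemma tendsto_nthRoot_atTop (hk : k ≠ 0) : Tendsto (Nat.nthRoot k) atTop atTop :=
  tendsto_atTop.2 fun b => (eventually_ge_atTop (b ^ k)).mono fun _ hn =>
    (Nat.le_nthRoot_iff hk).2 hn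

lemma log_le_mul_nthRoot (hk : k ≠ 0) (n : ℕ) : Real.log n ≤ k * Nat.nthRoot k n := by
  rcases n.eq_zero_or_pos with rfl | hn
  · simp [hk]
  have hlt : (n : ℝ) ≤ (Nat.nthRoot k n + 1) ^ k := by
    exact_mod_cast (Nat.lt_pow_nthRoot_add_one hk n).le
  calc Real.log n ≤ Real.log ((Nat.nthRoot k n + 1) ^ k) :=
        Real.log_le_log (by exact_mod_cast hn) hlt
    _ = k * Real.log (Nat.nthRoot k n + 1) := Real.log_pow _ _
    _ ≤ k * Nat.nthRoot k n := by
      gcongr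
      linarith [Real.log_le_sub_one_of_pos (show (0 : ℝ) < Nat.nthRoot k n + 1 by positivity)]

lemma tendsto_nthRoot_pow_div_atTop_nhds_zero (h : j < k) :
    Tendsto (fun n : ℕ => (Nat.nthRoot k n : ℝ) ^ j / n) atTop (nhds 0) := by
  have hk : k ≠ 0 := by omega
  refine squeeze_zero' (.of_forall fun n => by positivity) ?_
    (tendsto_one_div_atTop_nhds_zero_nat.comp (tendsto_nthRoot_atTop hk))
  filter_upwards [(tendsto_nthRoot_atTop hk).eventually_ge_atTop 1] with n hn
  have hpow : Nat.nthRoot k n ^ j * Nat.nthRoot k n ≤ n :=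
    calc Nat.nthRoot k n ^ j * Nat.nthRoot k n = Nat.nthRoot k n ^ (j + 1) := (pow_succ _ _).symm
      _ ≤ Nat.nthRoot k n ^ k := Nat.pow_le_pow_right hn h
      _ ≤ n := (Nat.le_nthRoot_iff hk).1 le_rfl
  have hn' : 0 < n := (Nat.mul_pos (pow_pos hn j) hn).trans_le hpow
  rw [Function.comp_apply, div_le_div_iff₀ (by exact_mod_cast hn') (by exact_mod_cast hn), one_mul]
  exact_mod_cast hpow

lemma tendsto_pow_mul_const_pow_nthRoot {r : ℝ} (hk : k ≠ 0) (hr : 0 < r) (hr' : r < 1) (j : ℕ) :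
    Tendsto (fun n : ℕ => (n : ℝ) ^ j * r ^ Nat.nthRoot k n) atTop (nhds 0) := by
  have hlim : Tendsto (fun m : ℕ => ((m + 1 : ℕ) : ℝ) ^ (k * j) * r ^ (m + 1) / r) atTop
      (nhds 0) := by
    simpa using ((tendsto_add_atTop_iff_nat 1).2 <| tendsto_pow_const_mul_const_pow_of_abs_lt_one
      (k * j) (abs_lt.2 ⟨by linarith, hr'⟩)).div_const r
  refine squeeze_zero (fun n => by positivity) (fun n => ?_)
    (hlim.comp (tendsto_nthRoot_atTop hk))
  have hlt : (n : ℝ) ≤ ((Nat.nthRoot k n + 1 : ℕ) : ℝ) ^ k := by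
    exact_mod_cast (Nat.lt_pow_nthRoot_add_one hk n).le
  rw [Function.comp_apply, pow_succ, ← mul_assoc, mul_div_assoc, div_self hr.ne', mul_one, pow_mul]
  gcongr

end NthRoot

section Asymptotics

lemma tendsto_uniformProb_hasCrowdedBlock {t : ℕ → ℕ}
    (ht : Tendsto (fun n => (t n : ℝ) ^ 4 / n) atTop (nhds 0)) :
    Tendsto (fun n => uniformProb (HasCrowdedBlock (n := n) (t n))) atTop (nhds 0) := by
  refine squeeze_zero' (.of_forall fun n => uniformProb_nonneg _) ?_
    (by simpa using ht.const_mul 2)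
  filter_upwards [eventually_ge_atTop 3] with n hn
  have hn' : (3 : ℝ) ≤ n := by exact_mod_cast hn
  have hquad : (n : ℝ) ^ 2 ≤ (2 * n - 1) * (2 * n - 3) := by nlinarith
  calc uniformProb (HasCrowdedBlock (n := n) (t n))
      ≤ 2 * n * ((t n : ℝ) ^ 4 * (1 / ((2 * n - 1) * (2 * n - 3)))) :=
        uniformProb_hasCrowdedBlock_le (by omega) (t n)
    _ ≤ 2 * n * ((t n : ℝ) ^ 4 * (1 / (n : ℝ) ^ 2)) := by gcongr
    _ = 2 * ((t n : ℝ) ^ 4 / n) := by field_simp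

lemma tendsto_uniformProb_hasUnjoinedIntervals {m : ℕ → ℕ}
    (hm : Tendsto (fun n : ℕ => (n : ℝ) ^ 2 * (39 / 40) ^ m n) atTop (nhds 0)) :
    Tendsto (fun n => uniformProb (HasUnjoinedIntervals (n := n) (2 * m n) (n / 10))) atTop
      (nhds 0) := by
  refine squeeze_zero' (.of_forall fun n => uniformProb_nonneg _) ?_
    (by simpa using hm.const_mul 9)
  filter_upwards [eventually_ge_atTop 10] with n hn
  have hn' : (10 : ℝ) ≤ n := by exact_mod_cast hn
  have hw : (n : ℝ) ≤ 20 * (n / 10 : ℕ) := by exact_mod_cast (by omega : n ≤ 20 * (n / 10))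
  have hw' : ((n / 10 : ℕ) : ℝ) ≤ 2 * n := by exact_mod_cast (by omega : n / 10 ≤ 2 * n)
  have hbase_nonneg : 0 ≤ 1 - ((n / 10 : ℕ) : ℝ) / (2 * n) :=
    sub_nonneg.2 (div_le_one_of_le₀ hw' (by positivity))
  have hbase : 1 - ((n / 10 : ℕ) : ℝ) / (2 * n) ≤ 39 / 40 := by
    have : (1 / 40 : ℝ) ≤ ((n / 10 : ℕ) : ℝ) / (2 * n) := by
      rw [le_div_iff₀ (by linarith)]
      linarith
    linarith
  calc uniformProb (HasUnjoinedIntervals (n := n) (2 * m n) (n / 10))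
      ≤ (2 * n + 1) ^ 2 * (1 - ((n / 10 : ℕ) : ℝ) / (2 * n)) ^ m n :=
        uniformProb_hasUnjoinedIntervals_le (by omega)
    _ ≤ (3 * n) ^ 2 * (39 / 40) ^ m n := by
      gcongr
      linarith
    _ = 9 * ((n : ℝ) ^ 2 * (39 / 40) ^ m n) := by ring

lemma uniformProb_not_atMostOneNontrivialComponent_le {n m ℓ w : ℕ} {C : ChordDiagram n}
    (hm : 1 ≤ m) (hk : 10 * (m * ℓ) ≤ w) (hw : 10 * w ≤ n)
    (hC : ¬ HasCrowdedBlock (2 * (4 * (m * ℓ))) C) (hC' : ¬ HasUnjoinedIntervals ℓ w C) :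
    uniformProb (fun ω => ¬ AtMostOneNontrivialComponent (C, ω)) ≤ 4 * n * (3 / 4) ^ m := by
  have hℓ : ℓ ≤ m * ℓ := Nat.le_mul_of_pos_left ℓ hm
  obtain ⟨p, hp⟩ := exists_isPivot hC' (by omega)
  refine (uniformProb_mono fun ω hω => ?_).trans
    ((hp.mono hℓ).uniformProb_exists_not_mutualReach_le hC' hk hw)
  by_contra! hreach
  exact hω (atMostOneNontrivialComponent_of_forall_mutualReach hC hreach)

lemma one_sub_le_uniformProb_not_hasCrowdedBlock_and_atMostOneNontrivialComponent {n m ℓ w t : ℕ}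
    (hm : 1 ≤ m) (hk : 10 * (m * ℓ) ≤ w) (hw : 10 * w ≤ n) (ht : t ≤ 2 * (4 * (m * ℓ))) :
    1 - (uniformProb (HasCrowdedBlock (n := n) (2 * (4 * (m * ℓ)))) +
      uniformProb (HasUnjoinedIntervals (n := n) ℓ w) + 4 * n * (3 / 4) ^ m) ≤
    uniformProb fun D : OrientedChordDiagram n =>
      ¬ HasCrowdedBlock t D.1 ∧ AtMostOneNontrivialComponent D := by
  have := nonempty_chordDiagram n
  set good : OrientedChordDiagram n → Prop := fun D =>
    ¬ HasCrowdedBlock t D.1 ∧ AtMostOneNontrivialComponent D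
  set bad : ChordDiagram n → Prop := fun C =>
    HasCrowdedBlock (2 * (4 * (m * ℓ))) C ∨ HasUnjoinedIntervals ℓ w C
  have hcoins (C : ChordDiagram n) (hC : ¬ bad C) :
      uniformProb (fun ω => ¬ good (C, ω)) ≤ 4 * n * (3 / 4) ^ m := by
    obtain ⟨hcrowded, hunjoined⟩ := not_or.1 hC
    refine (uniformProb_mono fun ω hω hone => ?_).trans
      (uniformProb_not_atMostOneNontrivialComponent_le hm hk hw hcrowded hunjoined)
    exact hω ⟨fun h => hcrowded (h.mono ht), hone⟩
  linarith [uniformProb_prod_le (E := fun D => ¬ good D) (by positivity) hcoins,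
    uniformProb_or_le (HasCrowdedBlock (n := n) (2 * (4 * (m * ℓ)))) (HasUnjoinedIntervals ℓ w),
    uniformProb_add_uniformProb_not good]

/-- The number of common crossings sought for the pivot and each long chord. The exponent `16` is
one convenient choice: this number outgrows `log n`, while its eighth power is `o(n)`. -/
def linkCount (n : ℕ) : ℕ := Nat.nthRoot 16 n

lemma tendsto_linkCount_atTop : Tendsto linkCount atTop atTop :=
  tendsto_nthRoot_atTop (by norm_num)

lemma eventually_floor_five_mul_log_le :
    ∀ᶠ n : ℕ in atTop, ⌊5 * Real.log n⌋₊ ≤ 2 * (4 * (linkCount n * (2 * linkCount n))) := by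
  filter_upwards [tendsto_linkCount_atTop.eventually_ge_atTop 5] with n hn
  have hn' : (5 : ℝ) ≤ linkCount n := by exact_mod_cast hn
  have hlog : Real.log n ≤ (16 : ℕ) * linkCount n := log_le_mul_nthRoot (by norm_num) n
  refine Nat.floor_le_of_le ?_
  push_cast at hlog ⊢
  nlinarith

lemma eventually_ten_mul_le_div_ten :
    ∀ᶠ n : ℕ in atTop, 10 * (linkCount n * (2 * linkCount n)) ≤ n / 10 := by
  filter_upwards [tendsto_linkCount_atTop.eventually_ge_atTop 2] with n hn
  have hsq : 200 * (linkCount n * linkCount n) ≤ n :=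
    calc 200 * (linkCount n * linkCount n) ≤ linkCount n ^ 14 * (linkCount n * linkCount n) :=
          Nat.mul_le_mul_right _ ((by norm_num : 200 ≤ 2 ^ 14).trans (Nat.pow_le_pow_left hn 14))
      _ = linkCount n ^ 16 := by ring
      _ ≤ n := (Nat.le_nthRoot_iff (by norm_num)).1 le_rfl
  rw [Nat.le_div_iff_mul_le (by norm_num)]
  linarith

lemma tendsto_linkCount_pow_div : Tendsto
    (fun n => ((2 * (4 * (linkCount n * (2 * linkCount n))) : ℕ) : ℝ) ^ 4 / n) atTop (nhds 0) := by
  convert (tendsto_nthRoot_pow_div_atTop_nhds_zero (show 8 < 16 by norm_num)).const_mul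
    ((16 : ℝ) ^ 4) using 2
  · rw [linkCount]
    push_cast
    ring
  · simp

lemma tendsto_pow_mul_const_pow_linkCount {r : ℝ} (hr : 0 < r) (hr' : r < 1) (j : ℕ) :
    Tendsto (fun n : ℕ => (n : ℝ) ^ j * r ^ linkCount n) atTop (nhds 0) :=
  tendsto_pow_mul_const_pow_nthRoot (by norm_num) hr hr' j

end Asymptotics

theorem stmt14 :
    Filter.Tendsto
      (fun n : ℕ => probD n (fun D =>
        (¬ ∃ i < 2*n, 2 ≤ chordsInBlock n D.1 i ⌊5 * Real.log n⌋₊) ∧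
        (∀ x y : Fin (2*n),
          (∃ u, u ≠ x ∧ u ≠ D.1.1 x ∧ MutualReach D x u) →
          (∃ v, v ≠ y ∧ v ≠ D.1.1 y ∧ MutualReach D y v) →
          MutualReach D x y)))
      Filter.atTop (nhds 1) := by
  have hcrowded := tendsto_uniformProb_hasCrowdedBlock tendsto_linkCount_pow_div
  have hunjoined := tendsto_uniformProb_hasUnjoinedIntervals
    (tendsto_pow_mul_const_pow_linkCount (by norm_num) (by norm_num) 2)
  have hcoins : Tendsto (fun n : ℕ => 4 * (n : ℝ) * (3 / 4) ^ linkCount n) atTop (nhds 0) := by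
    simpa [mul_assoc] using
      (tendsto_pow_mul_const_pow_linkCount (r := 3 / 4) (by norm_num) (by norm_num) 1).const_mul 4
  refine tendsto_of_tendsto_of_tendsto_of_le_of_le'
    (by simpa using ((hcrowded.add hunjoined).add hcoins).const_sub 1) tendsto_const_nhds ?_
    (.of_forall fun n => uniformProb_le_one _)
  filter_upwards [tendsto_linkCount_atTop.eventually_ge_atTop 1, eventually_ten_mul_le_div_ten,
    eventually_floor_five_mul_log_le] with n hm hk hlog
  exact one_sub_le_uniformProb_not_hasCrowdedBlock_and_atMostOneNontrivialComponent hm hk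
    (Nat.mul_div_le n 10) hlog
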